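/- Let R be a ring and X a chain complex of left R-modules with a filtration (F^p)_{p∈ℤ}. For p, n ∈ ℤ let ι^p : F^p → X be the inclusion morphism of complexes and U^p_n := Im(H_n(ι^p)) ⊆ H_n(X). Then U^{p−1}_n ⊆ U^p_n and there is an isomorphism of R-modules U^p_n/U^{p−1}_n ≅ (Ker ∂_n ∩ F^p_n)/((Ker ∂_n ∩ F^{p−1}_n) + (Im ∂_{n+1} ∩ F^p_n)). -/

import Mathlib

open Submodule

variable {R : Type*} [Ring R]

section FiltrationSetup

variable (X : ℤ → Type*) [∀ n, AddCommGroup (X n)] [∀ n, Module R (X n)]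

/-- The `m`-th homology of a ℤ-indexed complex `(Y, e)` (with the homological-complex
convention `e i j : Y i →ₗ Y j`, nonzero only for `j = i − 1`):
`H_m = Ker(e m (m−1)) / Im(e (m+1) m)`. -/
abbrev homologyAt (Y : ℤ → Type*) [∀ n, AddCommGroup (Y n)] [∀ n, Module R (Y n)]
    (e : ∀ i j : ℤ, Y i →ₗ[R] Y j) (m : ℤ) :=
  ↥(LinearMap.ker (e m (m - 1))) ⧸
    Submodule.comap (LinearMap.ker (e m (m - 1))).subtype (LinearMap.range (e (m + 1) m))

variable (d : ∀ i j : ℤ, X i →ₗ[R] X j) (F : ℤ → ∀ n : ℤ, Submodule R (X n))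
variable (hsub : ∀ p i j : ℤ, ∀ x : X i, x ∈ F p i → d i j x ∈ F p j)

/-- The differentials of the subcomplex `F^p`, given by restricting those of `X`. -/
def subD (p i j : ℤ) : ↥(F p i) →ₗ[R] ↥(F p j) :=
  (d i j).restrict (fun x hx => hsub p i j x hx)

/-- The inclusion `Ker(∂_n^{F^p}) → Ker(∂_n^X)`. -/
def inclKer (p n : ℤ) :
    ↥(LinearMap.ker (subD X d F hsub p n (n - 1))) →ₗ[R] ↥(LinearMap.ker (d n (n - 1))) :=
  LinearMap.codRestrict _
    ((F p n).subtype.comp (LinearMap.ker (subD X d F hsub p n (n - 1))).subtype)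
    (fun x => by
      have hx : subD X d F hsub p n (n - 1) x.1 = 0 := x.2
      have h' : d n (n - 1) (x.1 : X n) = 0 := congrArg Subtype.val hx
      simpa [LinearMap.mem_ker] using h')

/-- The map `H_n(ι^p) : H_n(F^p) → H_n(X)` induced on homology by the inclusion
`ι^p : F^p → X`. -/
def homologyMapIncl (p n : ℤ) :
    homologyAt (fun m => ↥(F p m)) (subD X d F hsub p) n →ₗ[R] homologyAt X d n :=
  Submodule.mapQ _ _ (inclKer X d F hsub p n)
    (by
      rintro x ⟨y, hy⟩
      exact ⟨(y : X (n + 1)), congrArg Subtype.val hy⟩)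

end FiltrationSetup

/-!
Write `Z = Ker ∂_n`, `B = Im ∂_{n+1}` and `A = F^p_n`, so that `H_n(X) = Z/B`. Cycles of `F^p` are
the elements of `Z ∩ A`, hence `U^p_n` is the image of `φ : Z ∩ A → Z/B`, and `U^{p-1}_n` is
`φ(Z ∩ F^{p-1}_n)`. For any linear map `f` and any submodule `S` of its source, `f` induces
`Im f / f(S) ≅ source / (S + Ker f)`; here `Ker φ = B ∩ A`.
-/

section Subquotient

variable {M N : Type*} [AddCommGroup M] [Module R M] [AddCommGroup N] [Module R N]

/-- The isomorphism `Im f / f(S) ≅ M / (S + Ker f)` induced by a linear map `f : M → N`; the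
denominator `f(S)` is encoded as a submodule of `Im f`. -/
noncomputable def rangeQuotientMapEquiv (f : M →ₗ[R] N) (S : Submodule R M) :
    (↥(LinearMap.range f) ⧸ (S.map f).submoduleOf (LinearMap.range f)) ≃ₗ[R]
      M ⧸ (S ⊔ LinearMap.ker f) :=
  let g := ((S.map f).submoduleOf (LinearMap.range f)).mkQ ∘ₗ f.rangeRestrict
  have surjective_g : Function.Surjective g :=
    (mkQ_surjective _).comp f.surjective_rangeRestrict
  have ker_g : LinearMap.ker g = S ⊔ LinearMap.ker f := calc
    LinearMap.ker g = ((S.map f).submoduleOf (LinearMap.range f)).comap f.rangeRestrict := by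
      rw [LinearMap.ker_comp, ker_mkQ]
    _ = (S.map f).comap f := rfl
    _ = S ⊔ LinearMap.ker f := comap_map_eq f S
  (quotEquivOfEq _ _ ker_g.symm ≪≫ₗ g.quotKerEquivOfSurjective surjective_g).symm

variable (Z B : Submodule R M)

/-- The map `Z ∩ A → Z / (Z ∩ B)`, `z ↦ [z]`. With `Z` the cycles and `B` the boundaries of a
complex, it sends a cycle lying in `A` to its homology class. -/
def subquotientMk (A : Submodule R M) : ↥(Z ⊓ A) →ₗ[R] ↥Z ⧸ B.submoduleOf Z :=
  (B.submoduleOf Z).mkQ ∘ₗ inclusion inf_le_left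

theorem ker_subquotientMk (A : Submodule R M) :
    LinearMap.ker (subquotientMk Z B A) = (B ⊓ A).submoduleOf (Z ⊓ A) := by
  rw [subquotientMk, LinearMap.ker_comp, ker_mkQ]
  ext z
  exact (and_iff_left z.2.2).symm

variable {A A' : Submodule R M}

theorem map_subquotientMk_submoduleOf (hA : A' ≤ A) :
    ((Z ⊓ A').submoduleOf (Z ⊓ A)).map (subquotientMk Z B A) =
      LinearMap.range (subquotientMk Z B A') := by
  have hZ : Z ⊓ A' ≤ Z ⊓ A := inf_le_inf_left Z hA
  calc
    _ = (LinearMap.range (inclusion hZ)).map (subquotientMk Z B A) :=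
      congrArg (map _) (range_inclusion _ _ hZ).symm
    _ = LinearMap.range (subquotientMk Z B A') := (LinearMap.range_comp _ _).symm

theorem range_subquotientMk_mono (hA : A' ≤ A) :
    LinearMap.range (subquotientMk Z B A') ≤ LinearMap.range (subquotientMk Z B A) :=
  map_subquotientMk_submoduleOf Z B hA ▸ LinearMap.map_le_range

variable {Z B}

/-- The graded piece at `A' ≤ A` of the filtration which submodules of `M` induce on `Z / B`: the
image of `Z ∩ A` modulo that of `Z ∩ A'` is `(Z ∩ A) / ((Z ∩ A') + (B ∩ A))`. -/
noncomputable def subquotientGradedPieceEquiv (hB : B ≤ Z) (hA : A' ≤ A) :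
    (↥(LinearMap.range (subquotientMk Z B A)) ⧸
        (LinearMap.range (subquotientMk Z B A')).submoduleOf
          (LinearMap.range (subquotientMk Z B A))) ≃ₗ[R]
      ↥(Z ⊓ A) ⧸ ((Z ⊓ A') ⊔ (B ⊓ A)).submoduleOf (Z ⊓ A) :=
  have denominator_eq : (Z ⊓ A').submoduleOf (Z ⊓ A) ⊔ LinearMap.ker (subquotientMk Z B A) =
      ((Z ⊓ A') ⊔ (B ⊓ A)).submoduleOf (Z ⊓ A) := by
    rw [ker_subquotientMk,
      submoduleOf_sup_of_le (inf_le_inf_left Z hA) (inf_le_inf_right A hB)]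
  quotEquivOfEq _ _ (by rw [map_subquotientMk_submoduleOf Z B hA]) ≪≫ₗ
    rangeQuotientMapEquiv (subquotientMk Z B A) ((Z ⊓ A').submoduleOf (Z ⊓ A)) ≪≫ₗ
    quotEquivOfEq _ _ denominator_eq

end Subquotient

theorem range_homologyMapIncl
    (X : ℤ → Type*) [∀ n, AddCommGroup (X n)] [∀ n, Module R (X n)]
    (d : ∀ i j : ℤ, X i →ₗ[R] X j) (F : ℤ → ∀ n : ℤ, Submodule R (X n))
    (hsub : ∀ p i j : ℤ, ∀ x : X i, x ∈ F p i → d i j x ∈ F p j) (p n : ℤ) :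
    LinearMap.range (homologyMapIncl X d F hsub p n) =
      LinearMap.range (subquotientMk (LinearMap.ker (d n (n - 1)))
        (LinearMap.range (d (n + 1) n)) (F p n)) := by
  apply le_antisymm
  · rintro _ ⟨v, rfl⟩
    obtain ⟨y, rfl⟩ := Submodule.Quotient.mk_surjective _ v
    exact ⟨⟨y, (inclKer X d F hsub p n y).2, y.1.2⟩, rfl⟩
  · rintro _ ⟨⟨z, hzker, hzF⟩, rfl⟩
    exact ⟨Submodule.Quotient.mk ⟨⟨z, hzF⟩, Subtype.ext hzker⟩, rfl⟩

/-- Let `R` be a ring and `X` a chain complex of left `R`-modules with a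
filtration `(F p)ₚ` by subcomplexes; for `p n : ℤ` let `U^p_n := Im(H_n(ι^p)) ⊆ H_n(X)` where
`ι^p : F^p → X` is the inclusion.  Then `U^{p−1}_n ⊆ U^p_n` and
`U^p_n/U^{p−1}_n ≅ (Ker ∂_n ∩ F^p_n)/((Ker ∂_n ∩ F^{p−1}_n) + (Im ∂_{n+1} ∩ F^p_n))`
as `R`-modules. -/
theorem filtration_homology_graded_piece_iso
    (X : ℤ → Type*) [∀ n, AddCommGroup (X n)] [∀ n, Module R (X n)]
    (d : ∀ i j : ℤ, X i →ₗ[R] X j)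
    (hshape : ∀ i j : ℤ, j ≠ i - 1 → d i j = 0)
    (hdd : ∀ i j k : ℤ, ∀ x : X i, d j k (d i j x) = 0)
    (F : ℤ → ∀ n : ℤ, Submodule R (X n))
    (hmono : ∀ p n : ℤ, F (p - 1) n ≤ F p n)
    (hsub : ∀ p i j : ℤ, ∀ x : X i, x ∈ F p i → d i j x ∈ F p j)
    (p n : ℤ)
    (U : ℤ → Submodule R (homologyAt X d n))
    (hU : ∀ p' : ℤ, U p' = LinearMap.range (homologyMapIncl X d F hsub p' n)) :
    U (p - 1) ≤ U p ∧
      Nonempty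
        ((↥(U p) ⧸ Submodule.comap (U p).subtype (U (p - 1))) ≃ₗ[R]
          ↥(LinearMap.ker (d n (n - 1)) ⊓ F p n) ⧸
            Submodule.comap (LinearMap.ker (d n (n - 1)) ⊓ F p n).subtype
              ((LinearMap.ker (d n (n - 1)) ⊓ F (p - 1) n) ⊔
                (LinearMap.range (d (n + 1) n) ⊓ F p n))) := by
  obtain rfl : U = fun q ↦ LinearMap.range (subquotientMk (LinearMap.ker (d n (n - 1)))
      (LinearMap.range (d (n + 1) n)) (F q n)) :=
    funext fun q ↦ (hU q).trans (range_homologyMapIncl X d F hsub q n)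
  have boundaries_le_cycles :
      LinearMap.range (d (n + 1) n) ≤ LinearMap.ker (d n (n - 1)) := by
    rintro _ ⟨x, rfl⟩
    exact hdd (n + 1) n (n - 1) x
  exact ⟨range_subquotientMk_mono _ _ (hmono p n),
    ⟨subquotientGradedPieceEquiv boundaries_le_cycles (hmono p n)⟩⟩
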